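/- Let k ≥ 2 and 2 ≤ ℓ ≤ k be integers, let u be a real number and L ≥ 0. Then I_{k,ℓ}(u,L) = ∑_{m=0}^∞ u^m · L^{k+m−1} · 2^{1−k} / (k+m−1)! · C(ℓ+m−2, m), where the series on the right converges absolutely. -/

import Mathlib

open Real MeasureTheory

/-- `I_{k,ℓ}(u,L)`: the integral of `exp(2u(v₁+⋯+v_{ℓ−1}))` over the open simplex
`{v ∈ ℝ^{k−1} : vᵢ > 0, v₁+⋯+v_{k−1} < L/2}` (coordinates are 0-indexed:
`v i` is `v_{i+1}`). -/
noncomputable def Ikl (k l : ℕ) (u L : ℝ) : ℝ :=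
  ∫ v in {v : Fin (k-1) → ℝ | (∀ i, 0 < v i) ∧ ∑ i, v i < L/2},
    Real.exp (2 * u * ∑ i ∈ Finset.univ.filter (fun i : Fin (k-1) => i.val < l - 1), v i)

/-- The `j`-th (1-indexed) coordinate `w_j` for `1 ≤ j ≤ k−1`, with the convention
`w_k = L/2 − (w₁+⋯+w_{k−1})`. -/
noncomputable def wcoord (k : ℕ) (L : ℝ) (w : Fin (k-1) → ℝ) (j : ℕ) : ℝ :=
  if h : j - 1 < k - 1 then w ⟨j - 1, h⟩ else L/2 - ∑ i, w i

/-- `Ĩ_{k,ℓ}(u,L)`: the integral of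
`exp(−2u(w₂+⋯+w_ℓ))·(1−e^{−w_ℓ})^{−2u}·(1−e^{−w₁})^{2u}` over the open simplex
`{w ∈ ℝ^{k−1} : wᵢ > 0, w₁+⋯+w_{k−1} < L/2}`, where `w_k = L/2 − (w₁+⋯+w_{k−1})`. -/
noncomputable def Itkl (k l : ℕ) (u L : ℝ) : ℝ :=
  ∫ w in {w : Fin (k-1) → ℝ | (∀ i, 0 < w i) ∧ ∑ i, w i < L/2},
    Real.exp (-(2*u) * ∑ j ∈ Finset.Icc 2 l, wcoord k L w j)
      * (1 - Real.exp (-(wcoord k L w l))) ^ (-(2*u))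
      * (1 - Real.exp (-(wcoord k L w 1))) ^ (2*u)

/-!
Expand the exponential as a power series under the integral sign. The multinomial theorem turns
`(∑ cᵢ vᵢ)ᵐ` into monomials, and Dirichlet's formula
`∫ ∏ vᵢ ^ aᵢ = (∏ aᵢ!) T ^ (n + |a|) / (n + |a|)!` over the `n`-dimensional simplex
`{v > 0, ∑ vᵢ < T}` cancels the multinomial coefficients: the `m`-th term is
`T ^ (n + m) / (n + m)!` times the complete homogeneous polynomial of degree `m` in `c`. When `p` of
the `cᵢ` equal `c` and the others vanish, that polynomial is `cᵐ` times the number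
`C(p + m - 1, m)` of its monomials.
-/

open scoped Nat

section Combinatorics

variable {ι : Type*} [DecidableEq ι]

lemma card_piAntidiag_nat (s : Finset ι) (m : ℕ) :
    (s.piAntidiag m).card = s.card.multichoose m := by
  rw [← Finset.card_finsuppAntidiag_nat_eq_multichoose]
  simp [Finset.finsuppAntidiag]

lemma sum_piAntidiag_prod_const_pow {R : Type*} [CommSemiring R] (s : Finset ι) (m : ℕ) (c : R) :
    ∑ a ∈ s.piAntidiag m, ∏ i ∈ s, c ^ a i = s.card.multichoose m * c ^ m := by
  have prod_eq : ∀ a ∈ s.piAntidiag m, ∏ i ∈ s, c ^ a i = c ^ m := fun a ha ↦ by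
    rw [Finset.prod_pow_eq_pow_sum, (Finset.mem_piAntidiag.1 ha).1]
  rw [Finset.sum_congr rfl prod_eq, Finset.sum_const, card_piAntidiag_nat, nsmul_eq_mul]

end Combinatorics

lemma integral_pow_mul_sub_pow {T : ℝ} (hT : 0 < T) (a b : ℕ) :
    ∫ x in (0 : ℝ)..T, x ^ a * (T - x) ^ b = a ! * b ! * (T ^ (a + b + 1) / (a + b + 1)!) := by
  have beta_eq : Complex.betaIntegral (a + 1) (b + 1) = a ! * b ! / (a + b + 1)! := by
    rw [Complex.betaIntegral_eq_Gamma_mul_div _ _ (by norm_cast; positivity)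
        (by norm_cast; positivity),
      ← Complex.Gamma_nat_eq_factorial, ← Complex.Gamma_nat_eq_factorial,
      ← Complex.Gamma_nat_eq_factorial]
    push_cast
    ring_nf
  have scaled := Complex.betaIntegral_scaled (a + 1) (b + 1) hT
  rw [beta_eq, show (a + 1 + (b + 1) - 1 : ℂ) = (a + b + 1 : ℕ) by push_cast; ring] at scaled
  simp only [add_sub_cancel_right, Complex.cpow_natCast] at scaled
  apply Complex.ofReal_injective
  rw [← intervalIntegral.integral_ofReal]
  push_cast
  rw [scaled]
  ring

lemma hasSum_integral_pow_div_factorial {α : Type*} [MeasurableSpace α] {μ : Measure α}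
    [IsFiniteMeasure μ] {f : α → ℝ} (hf : AEStronglyMeasurable f μ) {C : ℝ}
    (hC : ∀ᵐ x ∂μ, |f x| ≤ C) :
    HasSum (fun m : ℕ ↦ ∫ x, f x ^ m / m ! ∂μ) (∫ x, exp (f x) ∂μ) := by
  refine hasSum_integral_of_dominated_convergence (fun m _ ↦ C ^ m / m !)
    (fun m ↦ by fun_prop) (fun m ↦ ?_)
    (.of_forall fun _ ↦ summable_pow_div_factorial C) (integrable_const _)
    (.of_forall fun x ↦ ?_)
  · filter_upwards [hC] with x hx
    rw [norm_div, norm_pow, Real.norm_natCast, norm_eq_abs]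
    gcongr
  · rw [exp_eq_exp_ℝ]
    exact NormedSpace.expSeries_div_hasSum_exp (f x)

/-- The open corner simplex `{v ∈ ℝⁿ : vᵢ > 0, v₁ + ⋯ + vₙ < T}`, the domain of integration of
`Ikl`. It is empty for `T ≤ 0`, also when `n = 0`. -/
def openSimplex (n : ℕ) (T : ℝ) : Set (Fin n → ℝ) :=
  {v | (∀ i, 0 < v i) ∧ ∑ i, v i < T}

namespace openSimplex

variable {n : ℕ} {T : ℝ}

lemma isOpen : IsOpen (openSimplex n T) := by
  simp only [openSimplex, Set.ofPred_and, Set.ofPred_forall]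
  exact (isOpen_iInter_of_finite fun i ↦ isOpen_lt (by fun_prop) (by fun_prop)).inter
    (isOpen_lt (by fun_prop) (by fun_prop))

lemma measurableSet : MeasurableSet (openSimplex n T) :=
  isOpen.measurableSet

lemma subset_Icc : openSimplex n T ⊆ Set.Icc 0 (fun _ ↦ T) := fun _ hv ↦
  ⟨fun i ↦ (hv.1 i).le, fun i ↦
    (Finset.single_le_sum (fun j _ ↦ (hv.1 j).le) (Finset.mem_univ i)).trans hv.2.le⟩

lemma eq_empty (hT : T ≤ 0) : openSimplex n T = ∅ :=
  Set.eq_empty_of_forall_notMem fun _ hv ↦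
    (hT.trans (Finset.sum_nonneg fun i _ ↦ (hv.1 i).le)).not_gt hv.2

lemma zero_eq_univ (hT : 0 < T) : openSimplex 0 T = Set.univ := by
  simp [openSimplex, hT]

lemma cons_mem_iff {x : ℝ} {w : Fin n → ℝ} :
    (Fin.cons x w : Fin (n + 1) → ℝ) ∈ openSimplex (n + 1) T ↔
      0 < x ∧ w ∈ openSimplex n (T - x) := by
  simp only [openSimplex, Set.mem_ofPred_eq, Fin.forall_fin_succ, Fin.sum_univ_succ, Fin.cons_zero,
    Fin.cons_succ, lt_sub_iff_add_lt', and_assoc]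

lemma volume_lt_top : volume (openSimplex n T) < ⊤ :=
  (measure_mono subset_Icc).trans_lt isCompact_Icc.measure_lt_top

lemma integrableOn_of_continuous {E : Type*} [NormedAddCommGroup E] {f : (Fin n → ℝ) → E}
    (hf : Continuous f) : IntegrableOn f (openSimplex n T) :=
  (hf.continuousOn.integrableOn_compact isCompact_Icc).mono_set subset_Icc

lemma abs_sum_mul_le {v : Fin n → ℝ} (hv : v ∈ openSimplex n T) (s : Finset (Fin n))
    (c : Fin n → ℝ) : |∑ i ∈ s, c i * v i| ≤ ∑ i ∈ s, |c i| * T := by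
  refine (Finset.abs_sum_le_sum_abs _ _).trans (Finset.sum_le_sum fun i _ ↦ ?_)
  rw [abs_mul, abs_of_pos (hv.1 i)]
  exact mul_le_mul_of_nonneg_left ((subset_Icc hv).2 i) (abs_nonneg _)

lemma indicator_cons {E : Type*} [Zero E] (f : (Fin (n + 1) → ℝ) → E) (x : ℝ) (w : Fin n → ℝ) :
    (openSimplex (n + 1) T).indicator f (Fin.cons x w) =
      (Set.Ioo 0 T).indicator
        (fun x ↦ (openSimplex n (T - x)).indicator (fun w ↦ f (Fin.cons x w)) w) x := by
  have lt_of_mem (hw : w ∈ openSimplex n (T - x)) : x < T := by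
    by_contra! h
    simp [eq_empty (sub_nonpos.2 h)] at hw
  classical
  simp only [Set.indicator_apply, cons_mem_iff, Set.mem_Ioo]
  grind

lemma integral_succ {E : Type*} [NormedAddCommGroup E] [NormedSpace ℝ E]
    {f : (Fin (n + 1) → ℝ) → E} (hf : IntegrableOn f (openSimplex (n + 1) T)) :
    ∫ v in openSimplex (n + 1) T, f v =
      ∫ x in Set.Ioo 0 T, ∫ w in openSimplex n (T - x), f (Fin.cons x w) := by
  have cons_preserving := (volume_preserving_piFinSuccAbove (fun _ : Fin (n + 1) ↦ ℝ) 0).symm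
  have cons_embedding := (MeasurableEquiv.piFinSuccAbove
    (fun _ : Fin (n + 1) ↦ ℝ) 0).symm.measurableEmbedding
  have integrable_cons := (cons_preserving.integrable_comp_emb cons_embedding).2
    ((integrable_indicator_iff measurableSet).2 hf)
  calc ∫ v in openSimplex (n + 1) T, f v
      = ∫ x, ∫ w, (openSimplex (n + 1) T).indicator f (Fin.cons x w) := by
        rw [← integral_indicator measurableSet, ← cons_preserving.integral_comp cons_embedding]
        refine (integral_prod _ integrable_cons).trans ?_
        simp [MeasurableEquiv.piFinSuccAbove, Fin.insertNthEquiv, Fin.insertNth_zero']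
    _ = ∫ x in Set.Ioo 0 T, ∫ w in openSimplex n (T - x), f (Fin.cons x w) := by
        rw [← integral_indicator measurableSet_Ioo]
        congr 1 with x
        simp only [indicator_cons]
        by_cases hx : x ∈ Set.Ioo 0 T <;> simp [hx, integral_indicator measurableSet]

lemma integral_prod_pow (hT : 0 < T) (a : Fin n → ℕ) :
    ∫ v in openSimplex n T, ∏ i, v i ^ a i =
      (∏ i, (a i)! : ℕ) * (T ^ (n + ∑ i, a i) / (n + ∑ i, a i)!) := by
  induction n generalizing T with
  | zero => simp [zero_eq_univ hT, Measure.volume_pi_eq_dirac (fun _ : Fin 0 ↦ (0 : ℝ))]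
  | succ n ih =>
    set A := ∑ i : Fin n, a i.succ with hA
    have slice : ∀ x ∈ Set.Ioo 0 T,
        ∫ w in openSimplex n (T - x), ∏ i, (Fin.cons x w : Fin (n + 1) → ℝ) i ^ a i =
          ((∏ i : Fin n, (a i.succ)! : ℕ) / (n + A)! : ℝ) * (x ^ a 0 * (T - x) ^ (n + A)) := by
      intro x hx
      simp only [Fin.prod_univ_succ, Fin.cons_zero, Fin.cons_succ, integral_const_mul,
        ih (sub_pos.2 hx.2), ← hA]
      ring
    rw [integral_succ (integrableOn_of_continuous (by fun_prop)),
      setIntegral_congr_fun measurableSet_Ioo slice, integral_const_mul,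
      ← integral_Ioc_eq_integral_Ioo, ← intervalIntegral.integral_of_le hT.le,
      integral_pow_mul_sub_pow hT, Fin.sum_univ_succ, Fin.prod_univ_succ, ← hA,
      show n + 1 + (a 0 + A) = a 0 + (n + A) + 1 by ring]
    push_cast
    field_simp

lemma integral_prod_pow_of_mem_piAntidiag (hT : 0 < T) {s : Finset (Fin n)} {m : ℕ}
    {a : Fin n → ℕ} (ha : a ∈ s.piAntidiag m) :
    ∫ v in openSimplex n T, ∏ i ∈ s, v i ^ a i =
      (∏ i ∈ s, (a i)! : ℕ) * (T ^ (n + m) / (n + m)!) := by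
  obtain ⟨sum_eq, supp⟩ := Finset.mem_piAntidiag.1 ha
  have eq_zero (i : Fin n) (hi : i ∉ s) : a i = 0 := not_imp_comm.1 (supp i) hi
  have sum_univ : ∑ i, a i = m := by
    rw [← sum_eq, Finset.sum_subset s.subset_univ fun i _ ↦ eq_zero i]
  have factorial_univ : ∏ i ∈ s, (a i)! = ∏ i, (a i)! :=
    Finset.prod_subset s.subset_univ fun i _ hi ↦ by simp [eq_zero i hi]
  have monomial_univ (v : Fin n → ℝ) : ∏ i ∈ s, v i ^ a i = ∏ i, v i ^ a i :=
    Finset.prod_subset s.subset_univ fun i _ hi ↦ by simp [eq_zero i hi]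
  simp only [monomial_univ, factorial_univ, integral_prod_pow hT, sum_univ]

lemma integral_sum_mul_pow_div_factorial (hT : 0 < T) (s : Finset (Fin n)) (c : Fin n → ℝ)
    (m : ℕ) :
    ∫ v in openSimplex n T, (∑ i ∈ s, c i * v i) ^ m / m ! =
      (∑ a ∈ s.piAntidiag m, ∏ i ∈ s, c i ^ a i) * (T ^ (n + m) / (n + m)!) := by
  simp only [Finset.sum_pow_eq_sum_piAntidiag, mul_pow, Finset.prod_mul_distrib, integral_div]
  rw [integral_finsetSum _ fun a _ ↦ integrableOn_of_continuous (by fun_prop), Finset.sum_mul,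
    Finset.sum_div]
  refine Finset.sum_congr rfl fun a ha ↦ ?_
  have multinomial_eq : (∏ i ∈ s, (a i)! : ℕ) * (Nat.multinomial s a : ℝ) = m ! := by
    rw [← (Finset.mem_piAntidiag.1 ha).1]
    exact_mod_cast Nat.multinomial_spec s a
  rw [integral_const_mul, integral_const_mul, integral_prod_pow_of_mem_piAntidiag hT ha,
    div_eq_iff (by positivity), ← multinomial_eq]
  ring

lemma hasSum_integral_exp_sum_mul (hT : 0 < T) (s : Finset (Fin n)) (c : Fin n → ℝ) :
    HasSum
      (fun m : ℕ ↦ (∑ a ∈ s.piAntidiag m, ∏ i ∈ s, c i ^ a i) * (T ^ (n + m) / (n + m)!))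
      (∫ v in openSimplex n T, exp (∑ i ∈ s, c i * v i)) := by
  have : IsFiniteMeasure (volume.restrict (openSimplex n T)) :=
    isFiniteMeasure_restrict.2 volume_lt_top.ne
  simp only [← integral_sum_mul_pow_div_factorial hT]
  refine hasSum_integral_pow_div_factorial (C := ∑ i ∈ s, |c i| * T)
    (Continuous.aestronglyMeasurable (by fun_prop)) ?_
  filter_upwards [ae_restrict_mem measurableSet] with v hv using abs_sum_mul_le hv s c

lemma hasSum_integral_exp_mul_sum (hn : n ≠ 0) (hT : 0 ≤ T) (s : Finset (Fin n)) (c : ℝ) :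
    HasSum (fun m : ℕ ↦ s.card.multichoose m * c ^ m * (T ^ (n + m) / (n + m)!))
      (∫ v in openSimplex n T, exp (c * ∑ i ∈ s, v i)) := by
  rcases hT.eq_or_lt with rfl | hT
  · simp [eq_empty le_rfl, hn, hasSum_zero]
  · simpa only [sum_piAntidiag_prod_const_pow, ← Finset.mul_sum] using
      hasSum_integral_exp_sum_mul hT s fun _ ↦ c

end openSimplex

lemma hasSum_Ikl {k l : ℕ} (hk : 2 ≤ k) (hlk : l ≤ k) (u : ℝ) {L : ℝ} (hL : 0 ≤ L) :
    HasSum (fun m : ℕ ↦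
        (l - 1).multichoose m * (2 * u) ^ m * ((L / 2) ^ (k - 1 + m) / (k - 1 + m)!))
      (Ikl k l u L) := by
  have card_eq : (Finset.univ.filter fun i : Fin (k - 1) ↦ i.val < l - 1).card = l - 1 := by
    rw [Fin.card_filter_val_lt, min_eq_right (by omega)]
  simpa only [card_eq, Ikl] using! openSimplex.hasSum_integral_exp_mul_sum (by omega)
    (by positivity) (Finset.univ.filter fun i : Fin (k - 1) ↦ i.val < l - 1) (2 * u)

/-- **Power series for `I_{k,ℓ}` (proof of Proposition 5.2).** For `2 ≤ ℓ ≤ k`, `u ∈ ℝ`,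
`L ≥ 0`: `I_{k,ℓ}(u,L) = ∑_{m≥0} u^m L^{k+m−1} 2^{1−k}/(k+m−1)! · C(ℓ+m−2,m)`, the
series converging absolutely. -/
theorem stmt_4 (k l : ℕ) (hk : 2 ≤ k) (hl2 : 2 ≤ l) (hlk : l ≤ k) (u L : ℝ) (hL : 0 ≤ L) :
    Summable (fun m : ℕ =>
        |u^m * L^(k+m-1) * (2:ℝ)^(1 - (k:ℤ)) / ((k+m-1).factorial : ℝ)
          * ((l+m-2).choose m : ℝ)|) ∧
    Ikl k l u L = ∑' m : ℕ,
        u^m * L^(k+m-1) * (2:ℝ)^(1 - (k:ℤ)) / ((k+m-1).factorial : ℝ)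
          * ((l+m-2).choose m : ℝ) := by
  have term_eq (m : ℕ) :
      u^m * L^(k+m-1) * (2:ℝ)^(1 - (k:ℤ)) / ((k+m-1).factorial : ℝ) * ((l+m-2).choose m : ℝ) =
        (l - 1).multichoose m * (2 * u) ^ m * ((L / 2) ^ (k - 1 + m) / (k - 1 + m)!) := by
    rw [Nat.multichoose_eq, show l - 1 + m - 1 = l + m - 2 by omega,
      show k + m - 1 = k - 1 + m by omega, show 1 - (k : ℤ) = -(k - 1 : ℕ) by omega,
      zpow_neg, zpow_natCast, mul_pow, div_pow, pow_add 2]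
    field_simp
  have series := hasSum_Ikl hk hlk u hL
  simp only [term_eq]
  exact ⟨series.summable.abs, series.tsum_eq.symm⟩
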